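/- arXiv:1709.05020 — 6 statements merged into one kernel-verified Lean document; each statement's English description precedes it below -/
import Mathlib

section
/- Let λ < 0 and m, n ≥ 2 be integers. Let (x, y, θ) be a solution of the generating system on a finite interval (a, b) such that θ(t) ∈ (−3π/2, −π/2) for all t ∈ (a, b) (so the curve moves leftward), x(t) → 0 and y(t) → y_b as t → b⁻, where y_b > 0 and y_b ≠ λ + √(λ² + 2(n−1)). Then θ(t) → −π as t → b⁻; that is, the solution curve can be continuously extended to meet the y-axis, and it meets the y-axis perpendicularly. -/
open Real

/-!
Along a solution, multiplying the equation for `θ` by `x` gives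
`x θ' = -(m - 1) sin θ + x g` with `g` bounded near `b`. Since `x' = cos θ`, the quotient of the
derivatives of `x ^ (m - 1) * sin θ` and `x ^ (m - 1)` is `x g / (m - 1)`, so L'Hôpital's rule
yields `sin θ → 0`, and `-π` is the only zero of `sin` in the range allowed for `θ`.
-/

open Filter Set Topology

theorem tendsto_of_tendsto_add_mul_deriv_div {x x' u u' : ℝ → ℝ} {b μ : ℝ} {l : Filter ℝ}
    (hμ : 0 < μ) (hpos : ∀ᶠ t in 𝓝[<] b, 0 < x t)
    (hx : ∀ᶠ t in 𝓝[<] b, HasDerivAt x (x' t) t) (hx' : ∀ᶠ t in 𝓝[<] b, x' t ≠ 0)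
    (hu : ∀ᶠ t in 𝓝[<] b, HasDerivAt u (u' t) t) (hxlim : Tendsto x (𝓝[<] b) (𝓝 0))
    (hbdd : IsBoundedUnder (· ≤ ·) (𝓝[<] b) (norm ∘ u))
    (hlim : Tendsto (fun t ↦ u t + x t * u' t / (μ * x' t)) (𝓝[<] b) l) :
    Tendsto u (𝓝[<] b) l := by
  have hpow : Tendsto (fun t ↦ x t ^ μ) (𝓝[<] b) (𝓝 0) := by
    simpa only [zero_rpow hμ.ne'] using hxlim.rpow_const (Or.inr hμ.le)
  have hpow_deriv : ∀ᶠ t in 𝓝[<] b,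
      HasDerivAt (fun s ↦ x s ^ μ) (x' t * μ * x t ^ (μ - 1)) t := by
    filter_upwards [hpos, hx] with t hpos hx using hx.rpow_const (Or.inl hpos.ne')
  have hmul_deriv : ∀ᶠ t in 𝓝[<] b, HasDerivAt (fun s ↦ x s ^ μ * u s)
      (x' t * μ * x t ^ (μ - 1) * u t + x t ^ μ * u' t) t := by
    filter_upwards [hpow_deriv, hu] with t hpow hu using hpow.mul hu
  have hquot : Tendsto (fun t ↦ x t ^ μ * u t / x t ^ μ) (𝓝[<] b) l := by
    refine HasDerivAt.lhopital_zero_nhdsLT hmul_deriv hpow_deriv ?_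
      (hpow.zero_mul_isBoundedUnder_le hbdd) hpow (hlim.congr' ?_)
    · filter_upwards [hpos, hx'] with t hpos hx'
      have := rpow_pos_of_pos hpos (μ - 1)
      positivity
    · filter_upwards [hpos, hx'] with t hpos hx'
      have := rpow_pos_of_pos hpos (μ - 1)
      have hsplit : x t ^ μ = x t ^ (μ - 1) * x t := by
        rw [← rpow_add_one hpos.ne', sub_add_cancel]
      rw [hsplit]
      field_simp
  refine hquot.congr' ?_
  filter_upwards [hpos] with t hpos using mul_div_cancel_left₀ _ (rpow_pos_of_pos hpos μ).ne'

theorem isBoundedUnder_norm_sin {α : Type*} (l : Filter α) (θ : α → ℝ) :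
    IsBoundedUnder (· ≤ ·) l (norm ∘ fun t ↦ sin (θ t)) :=
  isBoundedUnder_of ⟨1, fun t ↦ abs_sin_le_one (θ t)⟩

theorem isBoundedUnder_norm_cos {α : Type*} (l : Filter α) (θ : α → ℝ) :
    IsBoundedUnder (· ≤ ·) l (norm ∘ fun t ↦ cos (θ t)) :=
  isBoundedUnder_of ⟨1, fun t ↦ abs_cos_le_one (θ t)⟩

theorem tendsto_sin_angle_zero {x θ g : ℝ → ℝ} {b μ : ℝ} (hμ : 0 < μ)
    (hpos : ∀ᶠ t in 𝓝[<] b, 0 < x t)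
    (hx : ∀ᶠ t in 𝓝[<] b, HasDerivAt x (cos (θ t)) t)
    (hθ : ∀ᶠ t in 𝓝[<] b, HasDerivAt θ (g t - μ / x t * sin (θ t)) t)
    (hcos : ∀ᶠ t in 𝓝[<] b, cos (θ t) ≠ 0) (hxlim : Tendsto x (𝓝[<] b) (𝓝 0))
    (hg : Tendsto (fun t ↦ x t * g t) (𝓝[<] b) (𝓝 0)) :
    Tendsto (fun t ↦ sin (θ t)) (𝓝[<] b) (𝓝 0) := by
  have hsin : ∀ᶠ t in 𝓝[<] b, HasDerivAt (fun s ↦ sin (θ s))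
      (cos (θ t) * (g t - μ / x t * sin (θ t))) t := hθ.mono fun _ h ↦ h.sin
  refine tendsto_of_tendsto_add_mul_deriv_div hμ hpos hx hcos hsin hxlim
    (isBoundedUnder_norm_sin _ θ) ?_
  rw [← zero_div μ]
  refine (hg.div_const μ).congr' ?_
  filter_upwards [hpos, hcos] with t hpos hcos
  field_simp
  ring

theorem cos_neg_of_mem_Ioo_neg_pi {θ : ℝ} (hθ : θ ∈ Ioo (-(3 * π / 2)) (-(π / 2))) :
    cos θ < 0 := by
  rw [← cos_neg]
  exact cos_neg_of_pi_div_two_lt_of_lt (by linarith [hθ.2]) (by linarith [hθ.1])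

theorem tendsto_neg_pi_of_tendsto_sin_zero {α : Type*} {l : Filter α} {θ : α → ℝ}
    (hrange : ∀ᶠ t in l, θ t ∈ Ioo (-(3 * π / 2)) (-(π / 2)))
    (hsin : Tendsto (fun t ↦ sin (θ t)) l (𝓝 0)) : Tendsto θ l (𝓝 (-π)) := by
  have harcsin : Tendsto (fun t ↦ -π - arcsin (sin (θ t))) l (𝓝 (-π)) := by
    simpa using ((continuous_arcsin.tendsto 0).comp hsin).const_sub (-π)
  refine harcsin.congr' ?_
  filter_upwards [hrange] with t ht
  have hreflect : sin (θ t) = sin (-π - θ t) := by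
    rw [← neg_add', sin_neg, add_comm, sin_add_pi, neg_neg]
  rw [hreflect, arcsin_sin (by linarith [ht.2]) (by linarith [ht.1]), sub_sub_cancel]

/-- The curve `(x, y, θ)` solves on `s` the generating system for profile curves of rotationally
symmetric `lam`-hypersurfaces. The dimensions `m` and `n` are real parameters here. -/
structure IsProfileCurveOn (lam m n : ℝ) (x y θ : ℝ → ℝ) (s : Set ℝ) : Prop where
  x_pos : ∀ t ∈ s, 0 < x t
  y_pos : ∀ t ∈ s, 0 < y t
  hasDerivAt_x : ∀ t ∈ s, HasDerivAt x (cos (θ t)) t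
  hasDerivAt_y : ∀ t ∈ s, HasDerivAt y (sin (θ t)) t
  hasDerivAt_angle : ∀ t ∈ s, HasDerivAt θ
    ((x t / 2 - (m - 1) / x t) * sin (θ t) + ((n - 1) / y t - y t / 2) * cos (θ t) + lam) t

theorem tendsto_mul_regular_part_zero {α : Type*} {l : Filter α} {x y : α → ℝ}
    {yb : ℝ} (lam n : ℝ) (θ : α → ℝ) (hyb : yb ≠ 0)
    (hx : Tendsto x l (𝓝 0)) (hy : Tendsto y l (𝓝 yb)) :
    Tendsto (fun t ↦ x t * (x t / 2 * sin (θ t) +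
      ((n - 1) / y t - y t / 2) * cos (θ t) + lam)) l (𝓝 0) := by
  have hcoeff : Tendsto (fun t ↦ (n - 1) / y t - y t / 2) l (𝓝 ((n - 1) / yb - yb / 2)) :=
    (tendsto_const_nhds.div hy hyb).sub (hy.div_const 2)
  have hsin : Tendsto (fun t ↦ x t * (x t / 2) * sin (θ t)) l (𝓝 0) :=
    Tendsto.zero_mul_isBoundedUnder_le (by simpa using hx.mul (hx.div_const 2))
      (isBoundedUnder_norm_sin l θ)
  have hcos : Tendsto (fun t ↦ x t * ((n - 1) / y t - y t / 2) * cos (θ t)) l (𝓝 0) :=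
    Tendsto.zero_mul_isBoundedUnder_le (by simpa using hx.mul hcoeff)
      (isBoundedUnder_norm_cos l θ)
  simpa [mul_add, mul_assoc] using (hsin.add hcos).add (hx.mul_const lam)

theorem meets_y_axis_perpendicularly_general {lam m n a b yb : ℝ} {x y θ : ℝ → ℝ}
    (hm : 1 < m) (hab : a < b) (hsol : IsProfileCurveOn lam m n x y θ (Ioo a b))
    (hrange : ∀ t ∈ Ioo a b, θ t ∈ Ioo (-(3 * π / 2)) (-(π / 2))) (hyb : yb ≠ 0)
    (hxlim : Tendsto x (𝓝[<] b) (𝓝 0)) (hylim : Tendsto y (𝓝[<] b) (𝓝 yb)) :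
    Tendsto θ (𝓝[<] b) (𝓝 (-π)) := by
  have hmem : ∀ᶠ t in 𝓝[<] b, t ∈ Ioo a b := Ioo_mem_nhdsLT hab
  refine tendsto_neg_pi_of_tendsto_sin_zero (hmem.mono hrange) ?_
  refine tendsto_sin_angle_zero (sub_pos.2 hm) (hmem.mono hsol.x_pos)
    (hmem.mono hsol.hasDerivAt_x) (hmem.mono fun t ht ↦ ?_)
    (hmem.mono fun t ht ↦ (cos_neg_of_mem_Ioo_neg_pi (hrange t ht)).ne) hxlim
    (tendsto_mul_regular_part_zero lam n θ hyb hxlim hylim)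
  exact (hsol.hasDerivAt_angle t ht).congr_deriv (by ring)

/-- A leftward-moving solution curve of the generating system that approaches the
`y`-axis at a positive height `y_b` (with `y_b` not equal to the special height
`λ + √(λ² + 2(n−1))`) meets the `y`-axis perpendicularly: θ(t) → −π as t → b⁻. -/
theorem meets_y_axis_perpendicularly
    (lam : ℝ) (hlam : lam < 0) (m n : ℕ) (hm : 2 ≤ m) (hn : 2 ≤ n)
    (a b : ℝ) (hab : a < b) (x y θ : ℝ → ℝ)
    (hpos : ∀ t ∈ Set.Ioo a b, 0 < x t ∧ 0 < y t)
    (hx : ∀ t ∈ Set.Ioo a b, HasDerivAt x (Real.cos (θ t)) t)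
    (hy : ∀ t ∈ Set.Ioo a b, HasDerivAt y (Real.sin (θ t)) t)
    (hθ : ∀ t ∈ Set.Ioo a b, HasDerivAt θ
      ((x t / 2 - ((m : ℝ) - 1) / x t) * Real.sin (θ t) +
        (((n : ℝ) - 1) / y t - y t / 2) * Real.cos (θ t) + lam) t)
    (hθrange : ∀ t ∈ Set.Ioo a b, θ t ∈ Set.Ioo (-(3 * π / 2)) (-(π / 2)))
    (yb : ℝ) (hyb : 0 < yb)
    (hyb' : yb ≠ lam + Real.sqrt (lam ^ 2 + 2 * ((n : ℝ) - 1)))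
    (hxlim : Filter.Tendsto x (nhdsWithin b (Set.Iio b)) (nhds 0))
    (hylim : Filter.Tendsto y (nhdsWithin b (Set.Iio b)) (nhds yb)) :
    Filter.Tendsto θ (nhdsWithin b (Set.Iio b)) (nhds (-π)) :=
  meets_y_axis_perpendicularly_general (mod_cast hm) hab
    ⟨fun t ht ↦ (hpos t ht).1, fun t ht ↦ (hpos t ht).2, hx, hy, hθ⟩ hθrange hyb.ne' hxlim hylim
end

section
/- Let λ < 0 and m, n ≥ 2 be integers. Let (x, y, θ) be a solution of the generating system on a finite interval (a, b) such that θ(t) ∈ (−π, 0) for all t ∈ (a, b) (so the curve moves downward), y(t) → 0 and x(t) → x_b as t → b⁻, where x_b > 0 and x_b ≠ λ + √(λ² + 2(m−1)). Then θ(t) → −π/2 as t → b⁻; that is, a solution curve that meets the x-axis away from the origin does so at a perpendicular angle. -/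
open Real

/-!
Near the `x`-axis the system is dominated by the singular term `((n - 1) / y) cos θ`, and
`y ≤ 2 (b - t)` because the curve has unit speed. So if `θ` exceeds some `e > -π/2`, then `θ'` is at
least a positive multiple of `1 / (b - t)`, which is not integrable: `θ` stays above `e` and blows
up, contradicting `θ < 0`. Reflecting the curve, `θ ↦ -π - θ`, preserves the form of the system and
yields the lower bound.
-/

section

open Filter Set Topology Asymptotics

variable {b : ℝ}

lemma eventually_lt_of_hasDerivAt_neg_of_tendsto {g g' : ℝ → ℝ} {l : ℝ}
    (hg : ∀ᶠ t in 𝓝[<] b, HasDerivAt g (g' t) t) (hneg : ∀ᶠ t in 𝓝[<] b, g' t < 0)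
    (hlim : Tendsto g (𝓝[<] b) (𝓝 l)) : ∀ᶠ t in 𝓝[<] b, l < g t := by
  obtain ⟨T, hTb, hT⟩ := mem_nhdsLT_iff_exists_Ioo_subset.1 (hg.and hneg)
  have hanti : StrictAntiOn g (Ioo T b) :=
    strictAntiOn_of_hasDerivWithinAt_neg (convex_Ioo T b)
      (fun t ht => (hT ht).1.continuousAt.continuousWithinAt)
      (fun t ht => (hT (interior_subset ht)).1.hasDerivWithinAt)
      (fun t ht => (hT (interior_subset ht)).2)
  filter_upwards [Ioo_mem_nhdsLT hTb] with t ht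
  obtain ⟨s, hts, hsb⟩ := exists_between ht.2
  have hs : s ∈ Ioo T b := ⟨ht.1.trans hts, hsb⟩
  have hls : l ≤ g s := by
    refine le_of_tendsto hlim ?_
    filter_upwards [Ioo_mem_nhdsLT hsb] with r hr
    exact (hanti hs ⟨hs.1.trans hr.1, hr.2⟩ hr.1).le
  exact hls.trans_lt (hanti ht hs hts)

lemma tendsto_const_sub_nhdsLT : Tendsto (fun t => b - t) (𝓝[<] b) (𝓝[>] 0) := by
  refine tendsto_nhdsWithin_iff.2 ⟨?_, ?_⟩
  · exact ((continuous_const.sub continuous_id).tendsto' b 0 (sub_self b)).mono_left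
      nhdsWithin_le_nhds
  · filter_upwards [self_mem_nhdsWithin] with t ht using sub_pos.2 (mem_Iio.1 ht)

lemma tendsto_atTop_of_mul_inv_le_deriv {p p' : ℝ → ℝ} {c : ℝ} (hc : 0 < c)
    (hp : ∀ᶠ t in 𝓝[<] b, HasDerivAt p (p' t) t)
    (hle : ∀ᶠ t in 𝓝[<] b, c * (b - t)⁻¹ ≤ p' t) : Tendsto p (𝓝[<] b) atTop := by
  obtain ⟨T, hTb, hT⟩ := mem_nhdsLT_iff_exists_Ioo_subset.1 (hp.and hle)
  have hderiv : ∀ t ∈ Ioo T b,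
      HasDerivAt (fun t => p t + c * log (b - t)) (p' t + c * (-1 / (b - t))) t := fun t ht =>
    (hT ht).1.add ((((hasDerivAt_id t).const_sub b).log (sub_pos.2 ht.2).ne').const_mul c)
  have hmono : MonotoneOn (fun t => p t + c * log (b - t)) (Ioo T b) := by
    refine monotoneOn_of_hasDerivWithinAt_nonneg (convex_Ioo T b)
      (fun t ht => (hderiv t ht).continuousAt.continuousWithinAt)
      (fun t ht => (hderiv t (interior_subset ht)).hasDerivWithinAt) (fun t ht => ?_)
    have : c * (-1 / (b - t)) = -(c * (b - t)⁻¹) := by ring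
    linarith [(hT (interior_subset ht)).2]
  obtain ⟨s, hs⟩ := exists_between (mem_Iio.1 hTb)
  have hlog : Tendsto (fun t => p s + c * log (b - s) - c * log (b - t)) (𝓝[<] b) atTop := by
    simp only [sub_eq_add_neg _ (c * _)]
    refine tendsto_atTop_add_const_left _ _ (tendsto_neg_atBot_atTop.comp ?_)
    exact (tendsto_log_nhdsGT_zero.comp tendsto_const_sub_nhdsLT).const_mul_atBot hc
  refine tendsto_atTop_mono' _ ?_ hlog
  filter_upwards [Ioo_mem_nhdsLT hs.2] with t ht
  linarith [hmono hs ⟨hs.1.trans ht.1, ht.2⟩ ht.1.le]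

lemma eventually_lt_of_mul_inv_le_deriv {p p' : ℝ → ℝ} {c e : ℝ} (hc : 0 < c)
    (hp : ∀ᶠ t in 𝓝[<] b, HasDerivAt p (p' t) t)
    (hle : ∀ᶠ t in 𝓝[<] b, e ≤ p t → c * (b - t)⁻¹ ≤ p' t)
    (hbdd : IsBoundedUnder (· ≤ ·) (𝓝[<] b) p) : ∀ᶠ t in 𝓝[<] b, p t < e := by
  obtain ⟨T, hTb, hT⟩ := mem_nhdsLT_iff_exists_Ioo_subset.1 (hp.and hle)
  by_contra hfreq
  obtain ⟨s, hes, hs⟩ := ((not_eventually.1 hfreq).and_eventually (Ioo_mem_nhdsLT hTb)).exists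
  have hIoo : ∀ {t r}, s ≤ t → t ≤ r → r < b → t ∈ Ioo T b := fun hst htr hrb =>
    ⟨hs.1.trans_le hst, htr.trans_lt hrb⟩
  have hstay : ∀ r ∈ Ioo s b, e ≤ p r := fun r hr =>
    image_le_of_deriv_right_lt_deriv_boundary' (f := fun _ => e) (f' := fun _ => 0)
      continuousOn_const (fun t _ => hasDerivWithinAt_const t _ e) (not_lt.1 hes)
      (fun t ht => (hT (hIoo ht.1 ht.2 hr.2)).1.continuousAt.continuousWithinAt)
      (fun t ht => (hT (hIoo ht.1 ht.2.le hr.2)).1.hasDerivWithinAt)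
      (fun t ht h => (mul_pos hc (inv_pos.2 (sub_pos.2 (ht.2.trans hr.2)))).trans_le
        ((hT (hIoo ht.1 ht.2.le hr.2)).2 h.le))
      (right_mem_Icc.2 hr.1.le)
  refine not_isBoundedUnder_of_tendsto_atTop (tendsto_atTop_of_mul_inv_le_deriv hc hp ?_) hbdd
  filter_upwards [hle, Ioo_mem_nhdsLT hs.2] with t h ht using h (hstay t ht)

section SingularAngle

variable {ν : ℝ} {y θ f : ℝ → ℝ}

lemma eventually_angle_lt (hν : 0 < ν)
    (hy : ∀ᶠ t in 𝓝[<] b, HasDerivAt y (sin (θ t)) t)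
    (hθ : ∀ᶠ t in 𝓝[<] b, HasDerivAt θ (ν / y t * cos (θ t) + f t) t)
    (hf : f =o[𝓝[<] b] fun t => (b - t)⁻¹)
    (hrange : ∀ᶠ t in 𝓝[<] b, θ t ∈ Ioo (-π) 0)
    (hylim : Tendsto y (𝓝[<] b) (𝓝 0)) {e : ℝ} (he : -(π / 2) < e) :
    ∀ᶠ t in 𝓝[<] b, θ t < e := by
  rcases le_or_gt 0 e with he0 | he0
  · filter_upwards [hrange] with t ht using ht.2.trans_le he0
  have hcos : 0 < cos e := cos_pos_of_mem_Ioo ⟨he, he0.trans pi_div_two_pos⟩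
  have hy_pos : ∀ᶠ t in 𝓝[<] b, 0 < y t :=
    eventually_lt_of_hasDerivAt_neg_of_tendsto hy
      (hrange.mono fun t ht => sin_neg_of_neg_of_neg_pi_lt ht.2 ht.1) hylim
  -- The factor 2 makes the derivative of the difference strictly negative even where `sin θ = -1`.
  have hy_lt : ∀ᶠ t in 𝓝[<] b, 0 < 2 * (b - t) - y t := by
    refine eventually_lt_of_hasDerivAt_neg_of_tendsto (g' := fun t => 2 * -1 - sin (θ t))
      (hy.mono fun t h => (((hasDerivAt_id t).const_sub b).const_mul 2).sub h)
      (.of_forall fun t => by linarith [neg_one_le_sin (θ t)]) ?_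
    simpa using ((tendsto_const_sub_nhdsLT.mono_right nhdsWithin_le_nhds).const_mul 2).sub hylim
  have hc : 0 < ν * cos e / 4 := by positivity
  refine eventually_lt_of_mul_inv_le_deriv hc hθ ?_
    (isBoundedUnder_of_eventually_le (hrange.mono fun t ht => ht.2.le))
  filter_upwards [hy_pos, hy_lt, hrange, hf.bound hc, self_mem_nhdsWithin]
    with t hy_pos hy_lt hrange hft htb het
  have hbt : 0 < b - t := sub_pos.2 htb
  rw [norm_of_nonneg (inv_pos.2 hbt).le] at hft
  have hcos_le : cos e ≤ cos (θ t) := by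
    rw [← cos_neg e, ← cos_neg (θ t)]
    exact cos_le_cos_of_nonneg_of_le_pi (by linarith [hrange.2]) (by linarith [pi_pos])
      (neg_le_neg het)
  have hsing : 2 * (ν * cos e / 4 * (b - t)⁻¹) ≤ ν / y t * cos (θ t) :=
    calc 2 * (ν * cos e / 4 * (b - t)⁻¹) = ν / (2 * (b - t)) * cos e := by field_simp; norm_num
      _ ≤ ν / y t * cos (θ t) := by gcongr; linarith
  linarith [(abs_le.1 hft).1]

theorem tendsto_angle_neg_pi_div_two (hν : 0 < ν)
    (hy : ∀ᶠ t in 𝓝[<] b, HasDerivAt y (sin (θ t)) t)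
    (hθ : ∀ᶠ t in 𝓝[<] b, HasDerivAt θ (ν / y t * cos (θ t) + f t) t)
    (hf : f =o[𝓝[<] b] fun t => (b - t)⁻¹)
    (hrange : ∀ᶠ t in 𝓝[<] b, θ t ∈ Ioo (-π) 0)
    (hylim : Tendsto y (𝓝[<] b) (𝓝 0)) : Tendsto θ (𝓝[<] b) (𝓝 (-(π / 2))) := by
  refine tendsto_order.2 ⟨fun e he => ?_, fun e he =>
    eventually_angle_lt hν hy hθ hf hrange hylim he⟩
  have hsin : ∀ t, sin (-π - θ t) = sin (θ t) := fun t => by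
    rw [← neg_add', sin_neg, add_comm, sin_add_pi, neg_neg]
  have hcos : ∀ t, cos (-π - θ t) = -cos (θ t) := fun t => by
    rw [← neg_add', cos_neg, add_comm, cos_add_pi]
  have hreflected : ∀ᶠ t in 𝓝[<] b, -π - θ t < -π - e := by
    refine eventually_angle_lt (y := y) (f := -f) hν ?_ ?_ hf.neg_left ?_ hylim (by linarith)
    · simpa only [hsin] using hy
    · filter_upwards [hθ] with t h
      refine (h.const_sub (-π)).congr_deriv ?_
      rw [hcos, Pi.neg_apply]
      ring
    · filter_upwards [hrange] with t ht using ⟨by linarith [ht.2], by linarith [ht.1]⟩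
  filter_upwards [hreflected] with t h using by linarith

end SingularAngle

lemma isLittleO_inv_const_sub_nhdsLT_of_isBigO_one {f : ℝ → ℝ}
    (hf : f =O[𝓝[<] b] fun _ => (1 : ℝ)) : f =o[𝓝[<] b] fun t => (b - t)⁻¹ :=
  hf.trans_isLittleO <| (isLittleO_one_left_iff ℝ).2 <|
    tendsto_norm_atTop_atTop.comp (tendsto_inv_nhdsGT_zero.comp tendsto_const_sub_nhdsLT)

theorem meets_x_axis_perpendicularly_general {lam m n xb : ℝ} {x y θ : ℝ → ℝ}
    (hn : 1 < n)
    (hy : ∀ᶠ t in 𝓝[<] b, HasDerivAt y (sin (θ t)) t)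
    (hθ : ∀ᶠ t in 𝓝[<] b, HasDerivAt θ
      ((x t / 2 - (m - 1) / x t) * sin (θ t) + ((n - 1) / y t - y t / 2) * cos (θ t) + lam) t)
    (hrange : ∀ᶠ t in 𝓝[<] b, θ t ∈ Ioo (-π) 0)
    (hxb : xb ≠ 0)
    (hylim : Tendsto y (𝓝[<] b) (𝓝 0)) (hxlim : Tendsto x (𝓝[<] b) (𝓝 xb)) :
    Tendsto θ (𝓝[<] b) (𝓝 (-(π / 2))) := by
  have hsin : (fun t => sin (θ t)) =O[𝓝[<] b] fun _ => (1 : ℝ) :=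
    .of_norm_le fun t => abs_sin_le_one (θ t)
  have hcos : (fun t => cos (θ t)) =O[𝓝[<] b] fun _ => (1 : ℝ) :=
    .of_norm_le fun t => abs_cos_le_one (θ t)
  have hx_term : (fun t => (x t / 2 - (m - 1) / x t) * sin (θ t)) =O[𝓝[<] b] fun _ => (1 : ℝ) := by
    have hcoeff : Tendsto (fun t => x t / 2 - (m - 1) / x t) (𝓝[<] b)
        (𝓝 (xb / 2 - (m - 1) / xb)) :=
      (hxlim.div_const 2).sub (tendsto_const_nhds.div hxlim hxb)
    simpa only [mul_one] using (hcoeff.isBigO_one ℝ).mul hsin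
  have hy_term : (fun t => y t / 2 * cos (θ t)) =O[𝓝[<] b] fun _ => (1 : ℝ) := by
    simpa only [mul_one] using ((hylim.div_const 2).isBigO_one ℝ).mul hcos
  have hregular := (hx_term.sub hy_term).add (isBigO_const_const lam one_ne_zero _)
  refine tendsto_angle_neg_pi_div_two (sub_pos.2 hn) hy (hθ.mono fun t h => ?_)
    (isLittleO_inv_const_sub_nhdsLT_of_isBigO_one hregular) hrange hylim
  exact h.congr_deriv (by ring)

end

/-- A downward-moving solution curve of the generating system that approaches the
`x`-axis at a positive abscissa `x_b` (with `x_b` not equal to the special value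
`λ + √(λ² + 2(m−1))`) meets the `x`-axis perpendicularly: θ(t) → −π/2 as t → b⁻. -/
theorem meets_x_axis_perpendicularly
    (lam : ℝ) (hlam : lam < 0) (m n : ℕ) (hm : 2 ≤ m) (hn : 2 ≤ n)
    (a b : ℝ) (hab : a < b) (x y θ : ℝ → ℝ)
    (hpos : ∀ t ∈ Set.Ioo a b, 0 < x t ∧ 0 < y t)
    (hx : ∀ t ∈ Set.Ioo a b, HasDerivAt x (Real.cos (θ t)) t)
    (hy : ∀ t ∈ Set.Ioo a b, HasDerivAt y (Real.sin (θ t)) t)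
    (hθ : ∀ t ∈ Set.Ioo a b, HasDerivAt θ
      ((x t / 2 - ((m : ℝ) - 1) / x t) * Real.sin (θ t) +
        (((n : ℝ) - 1) / y t - y t / 2) * Real.cos (θ t) + lam) t)
    (hθrange : ∀ t ∈ Set.Ioo a b, θ t ∈ Set.Ioo (-π) 0)
    (xb : ℝ) (hxb : 0 < xb)
    (hxb' : xb ≠ lam + Real.sqrt (lam ^ 2 + 2 * ((m : ℝ) - 1)))
    (hylim : Filter.Tendsto y (nhdsWithin b (Set.Iio b)) (nhds 0))
    (hxlim : Filter.Tendsto x (nhdsWithin b (Set.Iio b)) (nhds xb)) :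
    Filter.Tendsto θ (nhdsWithin b (Set.Iio b)) (nhds (-(π / 2))) := by
  have near {P : ℝ → Prop} (h : ∀ t ∈ Set.Ioo a b, P t) : ∀ᶠ t in nhdsWithin b (Set.Iio b), P t :=
    Filter.eventually_of_mem (Ioo_mem_nhdsLT hab) h
  exact meets_x_axis_perpendicularly_general (by exact_mod_cast hn) (near hy) (near hθ)
    (near hθrange) hxb.ne' hylim hxlim
end

section
/- Let λ < 0 and m, n ≥ 2 be integers. There is no solution (x, y, θ) of the generating system on an interval of positive length whose angle function θ is constant, θ(t) ≡ θ₀, with sin θ₀ ≠ 0 and cos θ₀ ≠ 0. In other words, the only straight-line solutions of the generating system are horizontal or vertical lines. -/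
open Real

/-!
Along an oblique line `x' = c` and `y' = s` are nonzero constants, and `θ'` vanishes identically.
The linear terms of `θ'` combine to `(s x - c y) / 2`, whose derivative is zero, so differentiating
`θ' = 0` leaves `(m - 1) / x ^ 2 = (n - 1) / y ^ 2`. Differentiating the cross-multiplied form
gives `(m - 1) y s = (n - 1) x c`. The two relations force `x s = y c`: the extended line passes
through the origin. Then the terms of `θ'` other than `λ` cancel in pairs, so `λ = 0`.
-/

open Filter Topology Set

section Derivatives

variable {𝕜 : Type*} [NontriviallyNormedField 𝕜] {t : 𝕜}

lemma hasDerivAt_eq_zero_of_eventuallyEq_const {F : Type*} [NormedAddCommGroup F]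
    [NormedSpace 𝕜 F] {f : 𝕜 → F} {f' k : F} (hf : HasDerivAt f f' t)
    (hconst : f =ᶠ[𝓝 t] fun _ ↦ k) : f' = 0 :=
  hf.unique ((hasDerivAt_const t k).congr_of_eventuallyEq hconst)

lemma mul_mul_deriv_eq_of_eventually_mul_sq_eq [NeZero (2 : 𝕜)] {f g : 𝕜 → 𝕜} {f' g' p q : 𝕜}
    (hf : HasDerivAt f f' t) (hg : HasDerivAt g g' t)
    (hsq : ∀ᶠ u in 𝓝 t, p * f u ^ 2 = q * g u ^ 2) : p * (f t * f') = q * (g t * g') := by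
  have hderiv := ((hf.fun_pow 2).const_mul p).fun_sub ((hg.fun_pow 2).const_mul q)
  have hzero := hasDerivAt_eq_zero_of_eventuallyEq_const hderiv
    (hsq.mono fun _ hu ↦ sub_eq_zero.mpr hu)
  refine mul_left_cancel₀ (two_ne_zero : (2 : 𝕜) ≠ 0) ?_
  push_cast at hzero
  linear_combination hzero

end Derivatives

lemma mul_eq_mul_of_mul_sq_eq_mul_sq {R : Type*} [CommRing R] [NoZeroDivisors R] {p q x y s c : R}
    (hx : x ≠ 0) (hy : y ≠ 0) (hpq : p ≠ 0 ∨ q ≠ 0) (hsq : p * y ^ 2 = q * x ^ 2)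
    (hmul : p * (y * s) = q * (x * c)) : x * s = y * c := by
  rcases hpq with hp | hq
  · refine mul_left_cancel₀ (mul_ne_zero hp hy) ?_
    linear_combination x * hmul - c * hsq
  · refine mul_left_cancel₀ (mul_ne_zero hq hx) ?_
    linear_combination y * hmul - s * hsq

/-- The right-hand side of the equation for `θ'` in the generating system, with real parameters
`m` and `n` in place of the dimensions. -/
noncomputable def angularVelocity (lam m n x y θ : ℝ) : ℝ :=
  (x / 2 - (m - 1) / x) * sin θ + ((n - 1) / y - y / 2) * cos θ + lam

/-- `(x, y, θ)` solves the generating system at every point of `U`. The curve may lie in any open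
quadrant: the axes, where the system is singular, are all that is excluded. -/
structure IsGeneratingSolution (lam m n : ℝ) (U : Set ℝ) (x y θ : ℝ → ℝ) : Prop where
  x_ne_zero : ∀ t ∈ U, x t ≠ 0
  y_ne_zero : ∀ t ∈ U, y t ≠ 0
  hasDerivAt_x : ∀ t ∈ U, HasDerivAt x (cos (θ t)) t
  hasDerivAt_y : ∀ t ∈ U, HasDerivAt y (sin (θ t)) t
  hasDerivAt_angle : ∀ t ∈ U, HasDerivAt θ (angularVelocity lam m n (x t) (y t) (θ t)) t

lemma hasDerivAt_angularVelocity_line {lam m n θ₀ t : ℝ} {x y : ℝ → ℝ}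
    (hx₀ : x t ≠ 0) (hy₀ : y t ≠ 0) (hx : HasDerivAt x (cos θ₀) t) (hy : HasDerivAt y (sin θ₀) t) :
    HasDerivAt (fun u ↦ angularVelocity lam m n (x u) (y u) θ₀)
      (sin θ₀ * cos θ₀ * ((m - 1) / x t ^ 2 - (n - 1) / y t ^ 2)) t := by
  have hx_part := (hx.div_const 2).fun_sub ((hasDerivAt_const t (m - 1)).fun_div hx hx₀)
  have hy_part := ((hasDerivAt_const t (n - 1)).fun_div hy hy₀).fun_sub (hy.div_const 2)
  refine (((hx_part.mul_const (sin θ₀)).fun_add (hy_part.mul_const (cos θ₀))).add_const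
    lam).congr_deriv ?_
  ring

lemma angularVelocity_eq_lam {lam m n x y θ₀ : ℝ} (hx₀ : x ≠ 0) (hy₀ : y ≠ 0)
    (horigin : x * sin θ₀ = y * cos θ₀)
    (hweighted : (m - 1) * (y * sin θ₀) = (n - 1) * (x * cos θ₀)) :
    angularVelocity lam m n x y θ₀ = lam := by
  have hsingular : (m - 1) / x * sin θ₀ = (n - 1) / y * cos θ₀ := by
    field_simp
    linear_combination hweighted
  unfold angularVelocity
  linear_combination horigin / 2 - hsingular

namespace IsGeneratingSolution

variable {lam m n θ₀ t : ℝ} {U : Set ℝ} {x y θ : ℝ → ℝ}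

lemma hasDerivAt_x_of_const_angle (h : IsGeneratingSolution lam m n U x y θ)
    (hθ : ∀ t ∈ U, θ t = θ₀) (ht : t ∈ U) : HasDerivAt x (cos θ₀) t :=
  hθ t ht ▸ h.hasDerivAt_x t ht

lemma hasDerivAt_y_of_const_angle (h : IsGeneratingSolution lam m n U x y θ)
    (hθ : ∀ t ∈ U, θ t = θ₀) (ht : t ∈ U) : HasDerivAt y (sin θ₀) t :=
  hθ t ht ▸ h.hasDerivAt_y t ht

lemma angularVelocity_eq_zero (h : IsGeneratingSolution lam m n U x y θ) (hU : IsOpen U)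
    (hθ : ∀ t ∈ U, θ t = θ₀) (ht : t ∈ U) : angularVelocity lam m n (x t) (y t) θ₀ = 0 :=
  hasDerivAt_eq_zero_of_eventuallyEq_const (hθ t ht ▸ h.hasDerivAt_angle t ht)
    (eventually_of_mem (hU.mem_nhds ht) hθ)

lemma sub_one_mul_y_sq_eq (h : IsGeneratingSolution lam m n U x y θ) (hU : IsOpen U)
    (hθ : ∀ t ∈ U, θ t = θ₀) (hs : sin θ₀ ≠ 0) (hc : cos θ₀ ≠ 0) (ht : t ∈ U) :
    (m - 1) * y t ^ 2 = (n - 1) * x t ^ 2 := by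
  have hx₀ := h.x_ne_zero t ht
  have hy₀ := h.y_ne_zero t ht
  have hderiv_zero : sin θ₀ * cos θ₀ * ((m - 1) / x t ^ 2 - (n - 1) / y t ^ 2) = 0 :=
    hasDerivAt_eq_zero_of_eventuallyEq_const
      (hasDerivAt_angularVelocity_line hx₀ hy₀ (h.hasDerivAt_x_of_const_angle hθ ht)
        (h.hasDerivAt_y_of_const_angle hθ ht))
      (eventually_of_mem (hU.mem_nhds ht) fun _ ↦ h.angularVelocity_eq_zero hU hθ)
  have hdiv : (m - 1) / x t ^ 2 = (n - 1) / y t ^ 2 :=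
    sub_eq_zero.mp ((mul_eq_zero.mp hderiv_zero).resolve_left (mul_ne_zero hs hc))
  exact (div_eq_div_iff (pow_ne_zero 2 hx₀) (pow_ne_zero 2 hy₀)).mp hdiv

lemma sub_one_mul_y_mul_sin_eq (h : IsGeneratingSolution lam m n U x y θ) (hU : IsOpen U)
    (hθ : ∀ t ∈ U, θ t = θ₀) (hs : sin θ₀ ≠ 0) (hc : cos θ₀ ≠ 0) (ht : t ∈ U) :
    (m - 1) * (y t * sin θ₀) = (n - 1) * (x t * cos θ₀) :=
  mul_mul_deriv_eq_of_eventually_mul_sq_eq (h.hasDerivAt_y_of_const_angle hθ ht)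
    (h.hasDerivAt_x_of_const_angle hθ ht)
    (eventually_of_mem (hU.mem_nhds ht) fun _ ↦ h.sub_one_mul_y_sq_eq hU hθ hs hc)

end IsGeneratingSolution

theorem no_oblique_line_solution_general {lam m n θ₀ : ℝ} {U : Set ℝ} {x y θ : ℝ → ℝ}
    (hlam : lam ≠ 0) (hmn : m ≠ 1 ∨ n ≠ 1) (hU : IsOpen U) (hne : U.Nonempty)
    (h : IsGeneratingSolution lam m n U x y θ) (hθ : ∀ t ∈ U, θ t = θ₀) :
    sin θ₀ = 0 ∨ cos θ₀ = 0 := by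
  by_contra! ⟨hs, hc⟩
  obtain ⟨t, ht⟩ := hne
  have hx₀ := h.x_ne_zero t ht
  have hy₀ := h.y_ne_zero t ht
  have hweighted := h.sub_one_mul_y_mul_sin_eq hU hθ hs hc ht
  have horigin : x t * sin θ₀ = y t * cos θ₀ :=
    mul_eq_mul_of_mul_sq_eq_mul_sq hx₀ hy₀ (hmn.imp sub_ne_zero.mpr sub_ne_zero.mpr)
      (h.sub_one_mul_y_sq_eq hU hθ hs hc ht) hweighted
  exact hlam ((angularVelocity_eq_lam hx₀ hy₀ horigin hweighted).symm.trans
    (h.angularVelocity_eq_zero hU hθ ht))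

/-- There is no straight-line solution of the generating system whose direction is
neither horizontal nor vertical: no solution on an interval of positive length can
have constant angle θ ≡ θ₀ with sin θ₀ ≠ 0 and cos θ₀ ≠ 0. -/
theorem no_oblique_line_solution
    (lam : ℝ) (hlam : lam < 0) (m n : ℕ) (hm : 2 ≤ m) (hn : 2 ≤ n) :
    ¬ ∃ (a b : ℝ) (x y θ : ℝ → ℝ) (θ₀ : ℝ),
      a < b ∧
      Real.sin θ₀ ≠ 0 ∧ Real.cos θ₀ ≠ 0 ∧
      (∀ t ∈ Set.Ioo a b, θ t = θ₀) ∧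
      (∀ t ∈ Set.Ioo a b, 0 < x t ∧ 0 < y t) ∧
      (∀ t ∈ Set.Ioo a b, HasDerivAt x (Real.cos (θ t)) t) ∧
      (∀ t ∈ Set.Ioo a b, HasDerivAt y (Real.sin (θ t)) t) ∧
      (∀ t ∈ Set.Ioo a b, HasDerivAt θ
        ((x t / 2 - ((m : ℝ) - 1) / x t) * Real.sin (θ t) +
          (((n : ℝ) - 1) / y t - y t / 2) * Real.cos (θ t) + lam) t) := by
  rintro ⟨a, b, x, y, θ, θ₀, hab, hs, hc, hθ, hpos, hx, hy, hθ'⟩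
  exact (no_oblique_line_solution_general hlam.ne (.inl (mod_cast (by lia : m ≠ 1))) isOpen_Ioo
    (Set.nonempty_Ioo.mpr hab)
    ⟨fun t ht ↦ (hpos t ht).1.ne', fun t ht ↦ (hpos t ht).2.ne', hx, hy, hθ'⟩ hθ).elim hs hc
end

section
/- Let λ < 0 and m, n ≥ 2 be integers, and let k > 0 be a real constant. There is no solution (x, y, θ) of the generating system on an interval of positive length with θ constant and y(t) = k·x(t) for all t; that is, no straight line through the origin satisfies the generating system. -/
open Real

/-!
Along a line `y = k x` the terms of the third equation that are linear in `x` and `y` cancel, and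
what is left is `θ' = A cos θ / x + λ` with `A = (n - 1) / k - (m - 1) k`. The first two equations
force `sin θ = k cos θ`; hence `cos θ ≠ 0` and, by differentiation, `θ' = 0`, so that
`λ x = -A cos θ`. Differentiating once more gives `λ cos θ = 0`, which is impossible for `λ ≠ 0`.
-/

open scoped Topology

lemma cos_ne_zero_of_sin_eq_mul_cos {k α : ℝ} (h : sin α = k * cos α) : cos α ≠ 0 := by
  intro hcos
  have hsin : sin α = 0 := by rw [h, hcos, mul_zero]
  simpa [hcos, hsin] using sin_sq_add_cos_sq α

lemma eq_zero_of_hasDerivAt_of_sin_eventuallyEq_mul_cos {θ : ℝ → ℝ} {θ' k t : ℝ}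
    (hθ : HasDerivAt θ θ' t) (h : (fun s ↦ sin (θ s)) =ᶠ[𝓝 t] fun s ↦ k * cos (θ s)) :
    θ' = 0 := by
  have hcos : cos (θ t) ≠ 0 := cos_ne_zero_of_sin_eq_mul_cos h.eq_of_nhds
  have hderiv : cos (θ t) * θ' = k * (-sin (θ t) * θ') :=
    hθ.sin.unique ((hθ.cos.const_mul k).congr_of_eventuallyEq h)
  have hprod : (1 + k ^ 2) * cos (θ t) * θ' = 0 := by
    linear_combination hderiv - k * θ' * h.eq_of_nhds
  simpa [hcos, (by positivity : 1 + k ^ 2 ≠ 0)] using hprod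

/-- The right-hand side of the angle equation of the generating system, with `m` and `n` allowed to
be arbitrary real numbers. -/
noncomputable def turningRate (lam m n x y α : ℝ) : ℝ :=
  (x / 2 - (m - 1) / x) * sin α + ((n - 1) / y - y / 2) * cos α + lam

lemma turningRate_mul_left_of_sin_eq_mul_cos (lam m n x : ℝ) {k α : ℝ} (h : sin α = k * cos α) :
    turningRate lam m n x (k * x) α = ((n - 1) / k - (m - 1) * k) * cos α / x + lam := by
  rw [turningRate, h]
  ring

/-- The curve `(x, y, θ)` solves the generating system on the set `s`. Its trace is only required
to avoid the coordinate axes, where the system is singular, rather than to lie in the open first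
quadrant. -/
structure IsGeneratingSolutionOn (lam m n : ℝ) (x y θ : ℝ → ℝ) (s : Set ℝ) : Prop where
  x_ne_zero : ∀ t ∈ s, x t ≠ 0
  y_ne_zero : ∀ t ∈ s, y t ≠ 0
  hasDerivAt_x : ∀ t ∈ s, HasDerivAt x (cos (θ t)) t
  hasDerivAt_y : ∀ t ∈ s, HasDerivAt y (sin (θ t)) t
  hasDerivAt_angle : ∀ t ∈ s, HasDerivAt θ (turningRate lam m n (x t) (y t) (θ t)) t

namespace IsGeneratingSolutionOn

variable {lam m n k : ℝ} {x y θ : ℝ → ℝ} {s : Set ℝ}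

lemma sin_eq_mul_cos_of_eqOn_line (h : IsGeneratingSolutionOn lam m n x y θ s) (hs : IsOpen s)
    (hline : s.EqOn y fun t ↦ k * x t) : s.EqOn (fun t ↦ sin (θ t)) fun t ↦ k * cos (θ t) :=
  fun t ht ↦ (h.hasDerivAt_y t ht).unique <|
    ((h.hasDerivAt_x t ht).const_mul k).congr_of_eventuallyEq <|
      hline.eventuallyEq_of_mem (hs.mem_nhds ht)

lemma turningRate_eq_zero_of_eqOn_line (h : IsGeneratingSolutionOn lam m n x y θ s)
    (hs : IsOpen s) (hline : s.EqOn y fun t ↦ k * x t) {t : ℝ} (ht : t ∈ s) :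
    turningRate lam m n (x t) (y t) (θ t) = 0 :=
  eq_zero_of_hasDerivAt_of_sin_eventuallyEq_mul_cos (h.hasDerivAt_angle t ht) <|
    (h.sin_eq_mul_cos_of_eqOn_line hs hline).eventuallyEq_of_mem (hs.mem_nhds ht)

lemma lam_mul_x_eqOn_of_eqOn_line (h : IsGeneratingSolutionOn lam m n x y θ s) (hs : IsOpen s)
    (hline : s.EqOn y fun t ↦ k * x t) :
    s.EqOn (fun t ↦ lam * x t) fun t ↦ -((n - 1) / k - (m - 1) * k) * cos (θ t) := by
  intro t ht
  have hx : x t ≠ 0 := h.x_ne_zero t ht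
  have hrate : ((n - 1) / k - (m - 1) * k) * cos (θ t) / x t + lam = 0 := by
    rw [← turningRate_mul_left_of_sin_eq_mul_cos _ _ _ _
      (h.sin_eq_mul_cos_of_eqOn_line hs hline ht)]
    simpa only [hline ht] using h.turningRate_eq_zero_of_eqOn_line hs hline ht
  rw [div_add' _ _ _ hx, div_eq_zero_iff, or_iff_left hx] at hrate
  linear_combination hrate

lemma lam_mul_cos_eq_zero_of_eqOn_line (h : IsGeneratingSolutionOn lam m n x y θ s)
    (hs : IsOpen s) (hline : s.EqOn y fun t ↦ k * x t) {t : ℝ} (ht : t ∈ s) :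
    lam * cos (θ t) = 0 := by
  have hangle : HasDerivAt θ 0 t :=
    h.turningRate_eq_zero_of_eqOn_line hs hline ht ▸ h.hasDerivAt_angle t ht
  have hx : HasDerivAt (fun r ↦ lam * x r)
      (-((n - 1) / k - (m - 1) * k) * (-sin (θ t) * 0)) t :=
    (hangle.cos.const_mul _).congr_of_eventuallyEq <|
      (h.lam_mul_x_eqOn_of_eqOn_line hs hline).eventuallyEq_of_mem (hs.mem_nhds ht)
  simpa only [mul_zero] using ((h.hasDerivAt_x t ht).const_mul lam).unique hx

end IsGeneratingSolutionOn

theorem no_line_through_origin_solution_general {lam m n : ℝ} (hlam : lam ≠ 0) {x y θ : ℝ → ℝ}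
    {s : Set ℝ} (hs : IsOpen s) (hne : s.Nonempty) (h : IsGeneratingSolutionOn lam m n x y θ s)
    (k : ℝ) : ¬ s.EqOn y fun t ↦ k * x t := by
  intro hline
  obtain ⟨t, ht⟩ := hne
  have hcos : cos (θ t) ≠ 0 :=
    cos_ne_zero_of_sin_eq_mul_cos (h.sin_eq_mul_cos_of_eqOn_line hs hline ht)
  exact mul_ne_zero hlam hcos (h.lam_mul_cos_eq_zero_of_eqOn_line hs hline ht)

/-- No straight line through the origin is a solution of the generating system:
there is no solution on an interval of positive length with constant angle θ and
with `y = k·x` for a positive constant `k`. -/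
theorem no_line_through_origin_solution
    (lam : ℝ) (hlam : lam < 0) (m n : ℕ) (hm : 2 ≤ m) (hn : 2 ≤ n)
    (k : ℝ) (hk : 0 < k) :
    ¬ ∃ (a b : ℝ) (x y θ : ℝ → ℝ),
      a < b ∧
      (∀ t₁ ∈ Set.Ioo a b, ∀ t₂ ∈ Set.Ioo a b, θ t₁ = θ t₂) ∧
      (∀ t ∈ Set.Ioo a b, y t = k * x t) ∧
      (∀ t ∈ Set.Ioo a b, 0 < x t ∧ 0 < y t) ∧
      (∀ t ∈ Set.Ioo a b, HasDerivAt x (Real.cos (θ t)) t) ∧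
      (∀ t ∈ Set.Ioo a b, HasDerivAt y (Real.sin (θ t)) t) ∧
      (∀ t ∈ Set.Ioo a b, HasDerivAt θ
        ((x t / 2 - ((m : ℝ) - 1) / x t) * Real.sin (θ t) +
          (((n : ℝ) - 1) / y t - y t / 2) * Real.cos (θ t) + lam) t) := by
  rintro ⟨a, b, x, y, θ, hab, -, hline, hpos, hx, hy, hθ⟩
  exact no_line_through_origin_solution_general hlam.ne isOpen_Ioo (Set.nonempty_Ioo.2 hab)
    ⟨fun t ht ↦ (hpos t ht).1.ne', fun t ht ↦ (hpos t ht).2.ne', hx, hy, hθ⟩ k hline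
end

section
/- Let λ < 0 and n ≥ 2 be an integer, and let (x, y, θ) be a solution of the generating system with m = n on an interval I. Define x̃(t) = y(−t), ỹ(t) = x(−t), θ̃(t) = −π/2 − θ(−t) for t ∈ −I. Then (x̃, ỹ, θ̃) is again a solution of the generating system with m = n on −I; i.e., for m = n the system is invariant under reflection across the diagonal line y = x combined with reversal of the parametrization. -/
open Real

/-!
Reflecting the curve across `y = x` and reversing its parametrization turns the tangent
`(cos θ, sin θ)` into `(-sin θ, -cos θ)`, which has angle `-π/2 - θ`, while two sign changes
cancel in `θ'`. In the equation for `θ'` the roles of `(x, m)` and `(y, n)` are exchanged, so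
the system with dimensions `(m, n)` is carried to the one with dimensions `(n, m)`.
-/

lemma cos_neg_pi_div_two_sub (φ : ℝ) : cos (-(π / 2) - φ) = -sin φ := by
  rw [sub_eq_add_neg, ← neg_add, cos_neg, add_comm, cos_add_pi_div_two]

lemma sin_neg_pi_div_two_sub (φ : ℝ) : sin (-(π / 2) - φ) = -cos φ := by
  rw [sub_eq_add_neg, ← neg_add, sin_neg, add_comm, sin_add_pi_div_two]

lemma hasDerivAt_comp_neg {𝕜 F : Type*} [NontriviallyNormedField 𝕜] [NormedAddCommGroup F]
    [NormedSpace 𝕜 F] {f : 𝕜 → F} {f' : F} {t : 𝕜} (hf : HasDerivAt f f' (-t)) :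
    HasDerivAt (fun u => f (-u)) (-f') t := by
  simpa only [Function.comp_def, neg_one_smul] using hf.scomp t (hasDerivAt_neg t)

/-- The right-hand side of the equation for `θ'` in the generating system with dimensions
`(m, n)`, which are allowed to be arbitrary real numbers. -/
noncomputable def generatingAngularSpeed (m n lam x y θ : ℝ) : ℝ :=
  (x / 2 - (m - 1) / x) * sin θ + ((n - 1) / y - y / 2) * cos θ + lam

lemma generatingAngularSpeed_reflect (m n lam x y θ : ℝ) :
    generatingAngularSpeed n m lam y x (-(π / 2) - θ) = generatingAngularSpeed m n lam x y θ := by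
  simp only [generatingAngularSpeed, cos_neg_pi_div_two_sub, sin_neg_pi_div_two_sub]
  ring

/-- The curve `(x, y, θ)` lies in the open first quadrant and solves the generating system with
dimensions `(m, n)` at every time in `I`. Derivatives are two-sided, also at endpoints of `I`. -/
structure IsGeneratingSolutionOn_s12 (m n lam : ℝ) (I : Set ℝ) (x y θ : ℝ → ℝ) : Prop where
  pos : ∀ t ∈ I, 0 < x t ∧ 0 < y t
  hasDerivAt_fst : ∀ t ∈ I, HasDerivAt x (cos (θ t)) t
  hasDerivAt_snd : ∀ t ∈ I, HasDerivAt y (sin (θ t)) t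
  hasDerivAt_angle : ∀ t ∈ I, HasDerivAt θ (generatingAngularSpeed m n lam (x t) (y t) (θ t)) t

open scoped Pointwise in
theorem reflection_across_diagonal_is_solution_general {m n lam : ℝ} {I : Set ℝ}
    {x y θ : ℝ → ℝ} (h : IsGeneratingSolutionOn_s12 m n lam I x y θ) :
    IsGeneratingSolutionOn_s12 n m lam (-I)
      (fun t => y (-t)) (fun t => x (-t)) (fun t => -(π / 2) - θ (-t)) where
  pos t ht := (h.pos (-t) ht).symm
  hasDerivAt_fst t ht := by
    simpa only [cos_neg_pi_div_two_sub] using hasDerivAt_comp_neg (h.hasDerivAt_snd (-t) ht)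
  hasDerivAt_snd t ht := by
    simpa only [sin_neg_pi_div_two_sub] using hasDerivAt_comp_neg (h.hasDerivAt_fst (-t) ht)
  hasDerivAt_angle t ht := by
    simpa only [generatingAngularSpeed_reflect, neg_neg] using
      (hasDerivAt_comp_neg (h.hasDerivAt_angle (-t) ht)).const_sub (-(π / 2))

/-- For `m = n`, the generating system is invariant under reflection across the diagonal
`y = x` combined with reversal of the parametrization: if `(x, y, θ)` is a solution on
`I`, then `x̃(t) = y(−t)`, `ỹ(t) = x(−t)`, `θ̃(t) = −π/2 − θ(−t)` is a solution on `−I`. -/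
theorem reflection_across_diagonal_is_solution
    (lam : ℝ) (hlam : lam < 0) (n : ℕ) (hn : 2 ≤ n)
    (I : Set ℝ) (x y θ : ℝ → ℝ)
    (hpos : ∀ t ∈ I, 0 < x t ∧ 0 < y t)
    (hx : ∀ t ∈ I, HasDerivAt x (Real.cos (θ t)) t)
    (hy : ∀ t ∈ I, HasDerivAt y (Real.sin (θ t)) t)
    (hθ : ∀ t ∈ I, HasDerivAt θ
      ((x t / 2 - ((n : ℝ) - 1) / x t) * Real.sin (θ t) +
        (((n : ℝ) - 1) / y t - y t / 2) * Real.cos (θ t) + lam) t) :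
    ∀ t : ℝ, -t ∈ I →
      (0 < y (-t) ∧ 0 < x (-t)) ∧
      HasDerivAt (fun u : ℝ => y (-u)) (Real.cos (-(π / 2) - θ (-t))) t ∧
      HasDerivAt (fun u : ℝ => x (-u)) (Real.sin (-(π / 2) - θ (-t))) t ∧
      HasDerivAt (fun u : ℝ => -(π / 2) - θ (-u))
        ((y (-t) / 2 - ((n : ℝ) - 1) / y (-t)) * Real.sin (-(π / 2) - θ (-t)) +
          (((n : ℝ) - 1) / x (-t) - x (-t) / 2) * Real.cos (-(π / 2) - θ (-t)) + lam) t := by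
  have ⟨hpos', hx', hy', hθ'⟩ := reflection_across_diagonal_is_solution_general ⟨hpos, hx, hy, hθ⟩
  exact fun t ht => ⟨hpos' t ht, hx' t ht, hy' t ht, hθ' t ht⟩
end

section
/- Let λ < 0 and n ≥ 2 be an integer, and let (r, s, φ) be a solution of the transformed system on an interval [a, b] such that s(t) ≥ 0, r(t) > s(t), and φ(t) ∈ (−π, 0) for all t ∈ [a, b]. Then there is at most one time t ∈ [a, b] with φ(t) = −π/2. -/
open Real

/-!
A function whose derivative is negative wherever it takes the value `c` can cross the level `c` only
downwards, hence at most once. When `φ = -π/2` the cosine vanishes and the sine is `-1`, so the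
equation for the angle becomes `φ' = λ - s/2 - 2(n - 1)s/(r² - s²)`, which is negative.
-/

open scoped Topology

theorem le_of_deriv_neg_on_level {f f' : ℝ → ℝ} {x y c : ℝ}
    (hf : ∀ t ∈ Set.Icc x y, HasDerivWithinAt f (f' t) (Set.Icc x y) t)
    (hneg : ∀ t ∈ Set.Ico x y, f t = c → f' t < 0) (hx : f x ≤ c) :
    ∀ t ∈ Set.Icc x y, f t ≤ c :=
  image_le_of_deriv_right_lt_deriv_boundary (fun t ht => (hf t ht).continuousWithinAt)
    (fun t ht => (hf t (Set.Ico_subset_Icc_self ht)).mono_of_mem_nhdsWithin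
      (Icc_mem_nhdsGE_of_mem ht))
    hx (fun t => hasDerivAt_const t c) hneg

theorem exists_lt_of_hasDerivWithinAt_neg {f : ℝ → ℝ} {f' x y : ℝ} (hxy : x < y)
    (hf : HasDerivWithinAt f f' (Set.Icc x y) y) (hf' : f' < 0) :
    ∃ t ∈ Set.Ico x y, f y < f t := by
  have hslope : ∀ᶠ t in 𝓝[Set.Ico x y] y, slope f y t < 0 :=
    (hf.mono Set.Ico_subset_Icc_self).limsup_slope_le' Set.right_notMem_Ico hf'
  have : (𝓝[Set.Ico x y] y).NeBot := right_nhdsWithin_Ico_neBot hxy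
  obtain ⟨t, hneg, ht⟩ := (hslope.and self_mem_nhdsWithin).exists
  refine ⟨t, ht, ?_⟩
  rwa [slope_comm, slope_neg_iff_of_le ht.2.le] at hneg

theorem subsingleton_level_of_deriv_neg {S : Set ℝ} (hS : S.OrdConnected) {f f' : ℝ → ℝ} {c : ℝ}
    (hf : ∀ t ∈ S, HasDerivWithinAt f (f' t) S t) (hneg : ∀ t ∈ S, f t = c → f' t < 0) :
    {t ∈ S | f t = c}.Subsingleton := by
  intro x hx y hy
  by_contra hne
  wlog hxy : x < y generalizing x y
  · exact this hy hx (Ne.symm hne) ((le_of_not_gt hxy).lt_of_ne' hne)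
  have hsub : Set.Icc x y ⊆ S := hS.out hx.1 hy.1
  have hderiv : ∀ t ∈ Set.Icc x y, HasDerivWithinAt f (f' t) (Set.Icc x y) t :=
    fun t ht => (hf t (hsub ht)).mono hsub
  have hle : ∀ t ∈ Set.Icc x y, f t ≤ c := le_of_deriv_neg_on_level hderiv
    (fun t ht => hneg t (hsub (Set.Ico_subset_Icc_self ht))) hx.2.le
  obtain ⟨t, ht, hlt⟩ := exists_lt_of_hasDerivWithinAt_neg hxy
    (hderiv y (Set.right_mem_Icc.2 hxy.le)) (hneg y hy.1 hy.2)
  exact (hle t (Set.Ico_subset_Icc_self ht)).not_gt (hy.2 ▸ hlt)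

theorem subsingleton_angle_eq_neg_pi_div_two {S : Set ℝ} (hS : S.OrdConnected)
    {φ p q k : ℝ → ℝ}
    (hφ : ∀ t ∈ S, HasDerivWithinAt φ (p t * cos (φ t) + q t * sin (φ t) + k t) S t)
    (hkq : ∀ t ∈ S, k t < q t) :
    {t ∈ S | φ t = -(π / 2)}.Subsingleton := by
  refine subsingleton_level_of_deriv_neg hS hφ fun t ht hφt => ?_
  calc p t * cos (φ t) + q t * sin (φ t) + k t = k t - q t := by
        rw [hφt, cos_neg, sin_neg, cos_pi_div_two, sin_pi_div_two]
        ring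
    _ < 0 := sub_neg.2 (hkq t ht)

theorem at_most_one_critical_time_general {lam n : ℝ} (hlam : lam < 0) (hn : 1 ≤ n)
    {S : Set ℝ} (hS : S.OrdConnected) {r s φ : ℝ → ℝ}
    (hφ : ∀ t ∈ S, HasDerivWithinAt φ
      ((-(r t) / 2 + 2 * (n - 1) * r t / (r t ^ 2 - s t ^ 2)) * cos (φ t) +
        (s t / 2 + 2 * (n - 1) * s t / (r t ^ 2 - s t ^ 2)) * sin (φ t) + lam) S t)
    (hs : ∀ t ∈ S, 0 ≤ s t) (hsr : ∀ t ∈ S, s t ^ 2 < r t ^ 2) :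
    {t ∈ S | φ t = -(π / 2)}.Subsingleton := by
  refine subsingleton_angle_eq_neg_pi_div_two hS hφ fun t ht => hlam.trans_le ?_
  have hst : 0 ≤ s t := hs t ht
  have : 0 ≤ n - 1 := sub_nonneg.2 hn
  have hdenom : 0 < r t ^ 2 - s t ^ 2 := sub_pos.2 (hsr t ht)
  positivity

/-- A solution of the transformed system staying below the diagonal (`s ≥ 0`, `r > s`)
with `φ ∈ (−π, 0)` passes through the angle `−π/2` at most once. -/
theorem at_most_one_critical_time
    (lam : ℝ) (hlam : lam < 0) (n : ℕ) (hn : 2 ≤ n)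
    (a b : ℝ) (r s φ : ℝ → ℝ)
    (hr : ∀ t ∈ Set.Icc a b, HasDerivAt r (Real.sin (φ t)) t)
    (hs : ∀ t ∈ Set.Icc a b, HasDerivAt s (Real.cos (φ t)) t)
    (hφ : ∀ t ∈ Set.Icc a b, HasDerivAt φ
      ((-(r t) / 2 + 2 * ((n : ℝ) - 1) * r t / ((r t) ^ 2 - (s t) ^ 2)) * Real.cos (φ t) +
        (s t / 2 + 2 * ((n : ℝ) - 1) * s t / ((r t) ^ 2 - (s t) ^ 2)) * Real.sin (φ t) +
        lam) t)
    (hsnn : ∀ t ∈ Set.Icc a b, 0 ≤ s t)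
    (hrs : ∀ t ∈ Set.Icc a b, s t < r t)
    (hφrange : ∀ t ∈ Set.Icc a b, φ t ∈ Set.Ioo (-π) 0) :
    ∀ t₁ ∈ Set.Icc a b, ∀ t₂ ∈ Set.Icc a b,
      φ t₁ = -(π / 2) → φ t₂ = -(π / 2) → t₁ = t₂ := by
  have h1n : (1 : ℝ) ≤ n := by exact_mod_cast one_le_two.trans hn
  have hsq : ∀ t ∈ Set.Icc a b, s t ^ 2 < r t ^ 2 := fun t ht =>
    pow_lt_pow_left₀ (hrs t ht) (hsnn t ht) two_ne_zero
  intro t₁ ht₁ t₂ ht₂ hφ₁ hφ₂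
  exact at_most_one_critical_time_general hlam h1n Set.ordConnected_Icc
    (fun t ht => (hφ t ht).hasDerivWithinAt) hsnn hsq ⟨ht₁, hφ₁⟩ ⟨ht₂, hφ₂⟩
end
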